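/- arXiv:1504.00174 — 2 statements merged into one kernel-verified Lean document; each statement's English description precedes it below -/
import Mathlib

section
/- Let R be a commutative ring with unit containing the field of rational numbers, V an R-module, and ∇' : V ⊗_R V → Sym_R(V) an R-bilinear map into the symmetric algebra of V. Let ∇ : Sym_R(V) ⊗_R Sym_R(V) → Sym_R(V) be the unique extension of ∇' satisfying the Leibniz rule in each argument. If ∇' is skew-symmetric, i.e. ∇'(x⊗y) = −∇'(y⊗x) for all x,y ∈ V, then ∇ is skew-symmetric on all of Sym_R(V). -/
/-!
A biderivation of a commutative algebra is determined by its values on pairs of generators: fixing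
one argument leaves a derivation in the other, and derivations are determined on generators. If
`∇` is a biderivation, so is `-(∇ ∘ σ)`. Skew-symmetry of `∇` on generators says that the two agree
there, so they are equal.
-/

noncomputable section

open MvPolynomial in
/-- The ideal of linearity relations presenting the symmetric algebra of the module `V`
as a quotient of the polynomial algebra on the set `V`. -/
def symIdeal (R V : Type) [CommRing R] [AddCommGroup V] [Module R V] :
    Ideal (MvPolynomial V R) :=
  Ideal.span
    ({p | ∃ v w : V, p = X (v + w) - X v - X w} ∪
     {p | ∃ (r : R) (v : V), p = X (r • v) - C r * X v})

/-- The symmetric algebra `Sym_R(V)` of an `R`-module `V`. -/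
abbrev SymmAlg (R V : Type) [CommRing R] [AddCommGroup V] [Module R V] : Type :=
  MvPolynomial V R ⧸ symIdeal R V

open MvPolynomial in
/-- The canonical linear inclusion `V → Sym_R(V)`. -/
def symι (R V : Type) [CommRing R] [AddCommGroup V] [Module R V] :
    V →ₗ[R] SymmAlg R V where
  toFun v := Ideal.Quotient.mk (symIdeal R V) (X v)
  map_add' v w := by
    rw [← map_add, Ideal.Quotient.eq]
    exact Ideal.subset_span (Or.inl ⟨v, w, by ring⟩)
  map_smul' r v := by
    simp only [RingHom.id_apply]
    rw [show r • (Ideal.Quotient.mk (symIdeal R V)) (X v)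
          = Ideal.Quotient.mk (symIdeal R V) (r • X v) from
        (map_smul (Ideal.Quotient.mkₐ R (symIdeal R V)) r (X v)).symm]
    rw [show r • (X v : MvPolynomial V R) = C r * X v from by rw [smul_eq_C_mul]]
    rw [Ideal.Quotient.eq]
    exact Ideal.subset_span (Or.inr ⟨r, v, by ring⟩)

section Biderivation

variable {R A M : Type*} [CommSemiring R] [CommSemiring A] [Algebra R A]
  [AddCommGroup M] [Module R M] [Module A M]

/-- A biderivation of the `R`-algebra `A` with values in the `A`-module `M`: an `R`-bilinear map
that satisfies the Leibniz rule in each argument. As for `Derivation`, the rule is written with the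
scalars on the left. -/
structure IsBiderivation (D : A →ₗ[R] A →ₗ[R] M) : Prop where
  leibniz_left (a b c : A) : D (a * b) c = a • D b c + b • D a c
  leibniz_right (a b c : A) : D a (b * c) = b • D a c + c • D a b

namespace IsBiderivation

variable {D E : A →ₗ[R] A →ₗ[R] M}

theorem flip (hD : IsBiderivation D) : IsBiderivation D.flip where
  leibniz_left a b c := hD.leibniz_right c a b
  leibniz_right a b c := hD.leibniz_left b c a

theorem neg (hD : IsBiderivation D) : IsBiderivation (-D) where
  leibniz_left a b c := by
    simp only [LinearMap.neg_apply, hD.leibniz_left, smul_neg, neg_add]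
  leibniz_right a b c := by
    simp only [LinearMap.neg_apply, hD.leibniz_right, smul_neg, neg_add]

/-- The derivation `b ↦ D a b` obtained from a biderivation `D` by fixing its first argument. -/
def derivation (hD : IsBiderivation D) (a : A) : Derivation R A M :=
  Derivation.mk' (D a) (hD.leibniz_right a)

theorem apply_eq_of_adjoin_eq_top (hD : IsBiderivation D) (hE : IsBiderivation E) {s : Set A}
    (hs : Algebra.adjoin R s = ⊤) {a : A} (h : ∀ y ∈ s, D a y = E a y) (b : A) :
    D a b = E a b :=
  have hderiv : hD.derivation a = hE.derivation a := Derivation.ext_of_adjoin_eq_top s hs h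
  Derivation.congr_fun hderiv b

theorem ext_of_adjoin_eq_top (hD : IsBiderivation D) (hE : IsBiderivation E) {s : Set A}
    (hs : Algebra.adjoin R s = ⊤) (h : ∀ x ∈ s, ∀ y ∈ s, D x y = E x y) : D = E := by
  have eq_of_left_mem : ∀ x ∈ s, ∀ b, D x b = E x b := fun x hx =>
    hD.apply_eq_of_adjoin_eq_top hE hs (h x hx)
  ext a b
  exact hD.flip.apply_eq_of_adjoin_eq_top hE.flip hs (fun x hx => eq_of_left_mem x hx b) a

end IsBiderivation

theorem statement0_general {D : A →ₗ[R] A →ₗ[R] M} (hD : IsBiderivation D) {s : Set A}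
    (hs : Algebra.adjoin R s = ⊤) (hskew : ∀ x ∈ s, ∀ y ∈ s, D x y = -D y x) (a b : A) :
    D a b = -D b a :=
  have hD_eq : D = -D.flip := hD.ext_of_adjoin_eq_top hD.flip.neg hs hskew
  LinearMap.congr_fun₂ hD_eq a b

end Biderivation

theorem adjoin_range_symι (R V : Type) [CommRing R] [AddCommGroup V] [Module R V] :
    Algebra.adjoin R (Set.range (symι R V)) = ⊤ := by
  let π := Ideal.Quotient.mkₐ R (symIdeal R V)
  have hπ : Function.Surjective π := Ideal.Quotient.mkₐ_surjective R (symIdeal R V)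
  calc Algebra.adjoin R (Set.range (symι R V))
      = Algebra.adjoin R (π '' Set.range MvPolynomial.X) :=
        congrArg (Algebra.adjoin R) (Set.range_comp π MvPolynomial.X)
    _ = (Algebra.adjoin R (Set.range MvPolynomial.X)).map π := (π.map_adjoin _).symm
    _ = ⊤ := by rw [MvPolynomial.adjoin_range_X, Algebra.map_top, π.range_eq_top.mpr hπ]

/-- **Lemma 3.1(1).** If a bilinear bracket on the symmetric algebra `Sym_R(V)` of an
`R`-module `V` (where `R` is a commutative ring containing `ℚ`) extends a bilinear map
`∇' : V ⊗ V → Sym_R(V)` and satisfies the Leibniz rule in each argument, then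
skew-symmetry of `∇'` on `V` implies skew-symmetry of the extension on all of `Sym_R(V)`. -/
theorem statement0 {R : Type} [CommRing R] [Algebra ℚ R]
    {V : Type} [AddCommGroup V] [Module R V]
    (nabla' : V →ₗ[R] V →ₗ[R] SymmAlg R V)
    (D : SymmAlg R V →ₗ[R] SymmAlg R V →ₗ[R] SymmAlg R V)
    (hext : ∀ x y : V, D (symι R V x) (symι R V y) = nabla' x y)
    (hleib_right : ∀ a b c : SymmAlg R V, D a (b * c) = D a b * c + b * D a c)
    (hleib_left : ∀ a b c : SymmAlg R V, D (a * b) c = D a c * b + a * D b c)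
    (hskew' : ∀ x y : V, nabla' x y = - nabla' y x) :
    ∀ a b : SymmAlg R V, D a b = - D b a := by
  have hD : IsBiderivation D :=
    ⟨fun a b c => by rw [hleib_left, smul_eq_mul, smul_eq_mul, add_comm, mul_comm b],
      fun a b c => by rw [hleib_right, smul_eq_mul, smul_eq_mul, add_comm, mul_comm c]⟩
  refine statement0_general hD (adjoin_range_symι R V) ?_
  rintro _ ⟨x, rfl⟩ _ ⟨y, rfl⟩
  rw [hext, hext, hskew']

end
end

section
/- Let R be a commutative ring with unit containing the field of rational numbers, V an R-module, ∇' : V ⊗_R V → Sym_R(V) an R-bilinear map, and ∇ its unique extension to Sym_R(V) ⊗_R Sym_R(V) → Sym_R(V) satisfying the Leibniz rule in each argument. If ∇' is skew-symmetric and satisfies the Jacobi identity {x,{y,z}} + {y,{z,x}} + {z,{x,y}} = 0 for all x,y,z ∈ V (the outer bracket being the Leibniz extension), then ∇ satisfies the Jacobi identity on all of Sym_R(V); consequently (Sym_R(V), ∇) is a Poisson algebra. -/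
/-!
A bracket satisfying the Leibniz rule in both arguments is a derivation `D` of `A` with values in
the module of derivations of `A`, and two derivations which agree on generators of `A` are equal.
Applied to `D` with its arguments exchanged and `-D`, this extends skew-symmetry from generators
to `A`. Once `D` is skew-symmetric, the Jacobi identity says `⁅D a, D b⁆ c = D (D a b) c`; for fixed
`a` and `b` both sides are derivations in `c`, so it suffices to check it for generators `c`. As the
Jacobi identity is invariant under rotating `a`, `b`, `c`, each argument can be reduced to
generators in turn.
-/

noncomputable section

section Biderivation

variable {R A M : Type*}

section Ext

variable [CommSemiring R] [CommSemiring A] [Algebra R A]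
  [AddCommMonoid M] [Module A M] [Module R M] [IsScalarTower R A M]

variable (R A M) in
/-- Biderivations `A × A → M`: `R`-bilinear maps satisfying the Leibniz rule in each argument,
encoded in curried form, as derivations with values in the `A`-module of derivations `A → M`. -/
abbrev Biderivation : Type _ := Derivation R A (Derivation R A M)

namespace Biderivation

theorem ext_of_adjoin_eq_top {s : Set A} (hs : Algebra.adjoin R s = ⊤)
    {D₁ D₂ : Biderivation R A M} (h : ∀ x ∈ s, ∀ y ∈ s, D₁ x y = D₂ x y) : D₁ = D₂ :=
  Derivation.ext_of_adjoin_eq_top s hs fun x hx ↦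
    Derivation.ext_of_adjoin_eq_top s hs fun y hy ↦ h x hx y hy

/-- The biderivation with exchanged arguments, `(a, b) ↦ D b a`. -/
def flip (D : Biderivation R A M) : Biderivation R A M where
  toFun b :=
    { toFun := fun a ↦ D a b
      map_add' := fun a a' ↦ by rw [map_add, Derivation.add_apply]
      map_smul' := fun r a ↦ by rw [Derivation.map_smul, Derivation.smul_apply, RingHom.id_apply]
      map_one_eq_zero' := by
        simp only [LinearMap.coe_mk, AddHom.coe_mk, Derivation.map_one_eq_zero,
          Derivation.zero_apply]
      leibniz' := fun a a' ↦ by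
        simp only [LinearMap.coe_mk, AddHom.coe_mk, Derivation.leibniz, Derivation.add_apply,
          Derivation.smul_apply] }
  map_add' b b' := Derivation.ext fun a ↦ map_add (D a) b b'
  map_smul' r b := Derivation.ext fun a ↦ (D a).map_smul r b
  map_one_eq_zero' := Derivation.ext fun a ↦ (D a).map_one_eq_zero
  leibniz' b b' := Derivation.ext fun a ↦ (D a).leibniz b b'

theorem flip_apply (D : Biderivation R A M) (a b : A) : D.flip a b = D b a :=
  rfl

end Biderivation

end Ext

namespace Biderivation

variable [CommRing R] [CommRing A] [Algebra R A]

section Skew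

variable [AddCommGroup M] [Module A M] [Module R M] [IsScalarTower R A M]

/-- The biderivation given by a bilinear map satisfying the Leibniz rule in each argument. -/
def ofLinearMap (B : A →ₗ[R] A →ₗ[R] M)
    (leibniz_right : ∀ a b c, B a (b * c) = b • B a c + c • B a b)
    (leibniz_left : ∀ a b c, B (a * b) c = a • B b c + b • B a c) : Biderivation R A M :=
  Derivation.mk'
    { toFun := fun a ↦ Derivation.mk' (B a) (leibniz_right a)
      map_add' := fun a a' ↦ Derivation.ext (LinearMap.congr_fun (map_add B a a'))
      map_smul' := fun r a ↦ Derivation.ext (LinearMap.congr_fun (map_smul B r a)) }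
    fun a b ↦ Derivation.ext (leibniz_left a b)

theorem skew_of_adjoin_eq_top {s : Set A} (hs : Algebra.adjoin R s = ⊤)
    (D : Biderivation R A M) (h : ∀ x ∈ s, ∀ y ∈ s, D x y = -D y x) (a b : A) :
    D a b = -D b a := by
  have D_eq : D = -D.flip := ext_of_adjoin_eq_top hs h
  exact DFunLike.congr_fun (DFunLike.congr_fun D_eq a) b

end Skew

/-- The cyclic sum whose vanishing is the Jacobi identity for the bracket `D`. -/
def jacobiator (D : Biderivation R A A) (a b c : A) : A :=
  D a (D b c) + D b (D c a) + D c (D a b)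

theorem jacobiator_rotate (D : Biderivation R A A) (a b c : A) :
    D.jacobiator b c a = D.jacobiator a b c := by
  unfold jacobiator
  abel

theorem jacobiator_eq_lie_sub {D : Biderivation R A A} (skew : ∀ a b, D a b = -D b a)
    (a b c : A) : D.jacobiator a b c = (⁅D a, D b⁆ - D (D a b)) c := by
  rw [jacobiator, skew c a, skew c (D a b), map_neg, Derivation.sub_apply,
    Derivation.commutator_apply]
  abel

variable {s : Set A} {D : Biderivation R A A}

theorem jacobiator_eq_zero_of_forall_mem_right (hs : Algebra.adjoin R s = ⊤)
    (skew : ∀ a b, D a b = -D b a) {a b : A} (h : ∀ z ∈ s, D.jacobiator a b z = 0) (c : A) :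
    D.jacobiator a b c = 0 := by
  simp only [jacobiator_eq_lie_sub skew] at h ⊢
  have lie_sub_eq_zero : ⁅D a, D b⁆ - D (D a b) = 0 := Derivation.ext_of_adjoin_eq_top s hs h
  rw [lie_sub_eq_zero, Derivation.zero_apply]

theorem jacobiator_eq_zero_of_adjoin_eq_top (hs : Algebra.adjoin R s = ⊤)
    (skew : ∀ a b, D a b = -D b a)
    (h : ∀ x ∈ s, ∀ y ∈ s, ∀ z ∈ s, D.jacobiator x y z = 0) (a b c : A) :
    D.jacobiator a b c = 0 := by
  have extend {a b : A} := jacobiator_eq_zero_of_forall_mem_right (a := a) (b := b) hs skew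
  have eq_zero_of_left_mem (x) (hx : x ∈ s) (b c : A) : D.jacobiator x b c = 0 := by
    rw [jacobiator_rotate]
    refine extend (fun y hy ↦ ?_) b
    rw [← jacobiator_rotate]
    exact extend (h x hx y hy) c
  rw [← jacobiator_rotate]
  refine extend (fun x hx ↦ ?_) a
  rw [jacobiator_rotate]
  exact eq_zero_of_left_mem x hx b c

end Biderivation

end Biderivation

theorem statement1_general {R A : Type*} [CommRing R] [CommRing A] [Algebra R A] {s : Set A}
    (hs : Algebra.adjoin R s = ⊤) (D : A →ₗ[R] A →ₗ[R] A)
    (hleib_right : ∀ a b c, D a (b * c) = D a b * c + b * D a c)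
    (hleib_left : ∀ a b c, D (a * b) c = D a c * b + a * D b c)
    (hskew : ∀ x ∈ s, ∀ y ∈ s, D x y = -D y x)
    (hjacobi : ∀ x ∈ s, ∀ y ∈ s, ∀ z ∈ s, D x (D y z) + D y (D z x) + D z (D x y) = 0) :
    (∀ a b c, D a (D b c) + D b (D c a) + D c (D a b) = 0) ∧ ∀ a b, D a b = -D b a := by
  let bracket : Biderivation R A A := .ofLinearMap D
    (fun a b c ↦ by rw [hleib_right, smul_eq_mul, smul_eq_mul]; ring)
    (fun a b c ↦ by rw [hleib_left, smul_eq_mul, smul_eq_mul]; ring)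
  have skew : ∀ a b, bracket a b = -bracket b a := bracket.skew_of_adjoin_eq_top hs hskew
  exact ⟨Biderivation.jacobiator_eq_zero_of_adjoin_eq_top hs skew hjacobi, skew⟩

/-- **Lemma 3.1(2).** If a bilinear bracket on `Sym_R(V)` extends a bilinear map
`∇' : V ⊗ V → Sym_R(V)` and satisfies the Leibniz rule in each argument, and if `∇'`
is skew-symmetric and satisfies the Jacobi identity on `V` (the outer bracket being the
Leibniz extension), then the extension satisfies the Jacobi identity on all of
`Sym_R(V)`; consequently `(Sym_R(V), ∇)` is a Poisson algebra. -/
theorem statement1 {R : Type} [CommRing R] [Algebra ℚ R]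
    {V : Type} [AddCommGroup V] [Module R V]
    (nabla' : V →ₗ[R] V →ₗ[R] SymmAlg R V)
    (D : SymmAlg R V →ₗ[R] SymmAlg R V →ₗ[R] SymmAlg R V)
    (hext : ∀ x y : V, D (symι R V x) (symι R V y) = nabla' x y)
    (hleib_right : ∀ a b c : SymmAlg R V, D a (b * c) = D a b * c + b * D a c)
    (hleib_left : ∀ a b c : SymmAlg R V, D (a * b) c = D a c * b + a * D b c)
    (hskew' : ∀ x y : V, nabla' x y = - nabla' y x)
    (hjacobi' : ∀ x y z : V,
      D (symι R V x) (nabla' y z) + D (symι R V y) (nabla' z x)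
        + D (symι R V z) (nabla' x y) = 0) :
    (∀ a b c : SymmAlg R V, D a (D b c) + D b (D c a) + D c (D a b) = 0) ∧
    -- consequently `(Sym_R(V), D)` is a Poisson algebra:
    (∀ a b : SymmAlg R V, D a b = - D b a) ∧
    (∀ a b c : SymmAlg R V, D a (b * c) = D a b * c + b * D a c) := by
  obtain ⟨jacobi, skew⟩ := statement1_general (adjoin_range_symι R V) D hleib_right hleib_left
    (by simpa only [Set.forall_mem_range, hext] using hskew')
    (by simpa only [Set.forall_mem_range, hext] using hjacobi')
  exact ⟨jacobi, skew, hleib_right⟩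

end
end
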